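/- arXiv:2107.01689 — 4 statements merged into one kernel-verified Lean document; each statement's English description precedes it below -/
import Mathlib

section
/- For every R > 0 and every policy a ∈ [0,1], the maximum regret nature can impose equals R times max(a, 1−a): sup over p ∈ [0,1]×[0,1] of L_R(a, p) = R·max(a, 1−a). -/
/-- Nature's parameter space: the unit square `[0,1] × [0,1]`. -/
def unitSq : Set (ℝ × ℝ) := Set.Icc 0 1 ×ˢ Set.Icc 0 1

/-- Agent's expected reward `G_R(a, p) = R·(a·p_A + (1 − a)·p_B)`. -/
noncomputable def reward (R a : ℝ) (p : ℝ × ℝ) : ℝ := R * (a * p.1 + (1 - a) * p.2)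

/-- Regret `L_R(a, p) = R·max(p_A, p_B) − G_R(a, p)`. -/
noncomputable def regret (R a : ℝ) (p : ℝ × ℝ) : ℝ := R * max p.1 p.2 - reward R a p

/-!
Regret comes only from the probability of acting on the worse arm: it is `R * a * (p_B - p_A)` when
arm B is the better one and `R * (1 - a) * (p_A - p_B)` otherwise. Both are at most
`R * max a (1 - a) * |p_A - p_B|`. On the unit square the gap `|p_A - p_B|` is largest at the
corners `(0, 1)` and `(1, 0)`, where the regret is `R * a` and `R * (1 - a)`.
-/

theorem regret_of_fst_le_snd (R a : ℝ) {p : ℝ × ℝ} (h : p.1 ≤ p.2) :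
    regret R a p = R * (a * (p.2 - p.1)) := by
  rw [regret, reward, max_eq_right h]
  ring

theorem regret_of_snd_le_fst (R a : ℝ) {p : ℝ × ℝ} (h : p.2 ≤ p.1) :
    regret R a p = R * ((1 - a) * (p.1 - p.2)) := by
  rw [regret, reward, max_eq_left h]
  ring

theorem regret_le_mul_abs_sub {R : ℝ} (hR : 0 ≤ R) (a : ℝ) (p : ℝ × ℝ) :
    regret R a p ≤ R * (max a (1 - a) * |p.1 - p.2|) := by
  rcases le_total p.1 p.2 with h | h
  · rw [regret_of_fst_le_snd R a h, abs_sub_comm, abs_of_nonneg (sub_nonneg.2 h)]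
    gcongr
    exact le_max_left a (1 - a)
  · rw [regret_of_snd_le_fst R a h, abs_of_nonneg (sub_nonneg.2 h)]
    gcongr
    exact le_max_right a (1 - a)

theorem max_self_one_sub_nonneg (a : ℝ) : 0 ≤ max a (1 - a) :=
  le_max_iff.2 <| (le_total 0 a).imp_right fun ha => by linarith

theorem regret_le_of_mem_unitSq {R : ℝ} (hR : 0 ≤ R) (a : ℝ) {p : ℝ × ℝ} (hp : p ∈ unitSq) :
    regret R a p ≤ R * max a (1 - a) := by
  have gap_le_one : |p.1 - p.2| ≤ 1 := Real.dist_le_of_mem_Icc_01 hp.1 hp.2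
  calc
    regret R a p ≤ R * (max a (1 - a) * |p.1 - p.2|) := regret_le_mul_abs_sub hR a p
    _ ≤ R * max a (1 - a) := by
      gcongr
      exact mul_le_of_le_one_right (max_self_one_sub_nonneg a) gap_le_one

theorem exists_mem_unitSq_regret_eq (R a : ℝ) :
    ∃ p ∈ unitSq, regret R a p = R * max a (1 - a) := by
  rcases le_total a (1 - a) with h | h
  · refine ⟨(1, 0), by simp [unitSq], ?_⟩
    rw [regret_of_snd_le_fst R a zero_le_one, max_eq_right h, sub_zero, mul_one]
  · refine ⟨(0, 1), by simp [unitSq], ?_⟩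
    rw [regret_of_fst_le_snd R a zero_le_one, max_eq_left h, sub_zero, mul_one]

theorem isGreatest_regret_image_unitSq {R : ℝ} (hR : 0 ≤ R) (a : ℝ) :
    IsGreatest (regret R a '' unitSq) (R * max a (1 - a)) :=
  ⟨exists_mem_unitSq_regret_eq R a,
    Set.forall_mem_image.2 fun _ hp => regret_le_of_mem_unitSq hR a hp⟩

theorem max_regret_eq_general {R : ℝ} (hR : 0 ≤ R) (a : ℝ) :
    sSup (regret R a '' unitSq) = R * max a (1 - a) :=
  (isGreatest_regret_image_unitSq hR a).csSup_eq

/-- for every `R > 0` and policy `a ∈ [0,1]`, the maximum regret nature can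
impose equals `R · max(a, 1 − a)`. -/
theorem max_regret_eq (R a : ℝ) (hR : 0 < R) (ha : a ∈ Set.Icc (0 : ℝ) 1) :
    sSup (regret R a '' unitSq) = R * max a (1 - a) :=
  max_regret_eq_general hR.le a
end

section
/- The max regret of a reward-maximizing policy can be arbitrarily large compared to a minimax regret-optimal policy: for every R > 0 the gap (sup over p of L_R(1, p)) − (min over a ∈ [0,1] of sup over p of L_R(a, p)) equals R/2, and consequently for every M > 0 there exists R > 0 for which this gap exceeds M. -/
/-- Max regret of policy `a`: `sup_{p ∈ [0,1]²} L_R(a, p)`. -/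
noncomputable def maxRegret (R a : ℝ) : ℝ := sSup (regret R a '' unitSq)

/-- Minimax regret: `min_{a ∈ [0,1]} maxRegret R a`. -/
noncomputable def minimaxRegret (R : ℝ) : ℝ := sInf ((fun a => maxRegret R a) '' Set.Icc (0 : ℝ) 1)

/-!
Only the arm with the larger `p` can be missed, so with `d = p_B - p_A` the regret is
`R * (a * d⁺ + (1 - a) * d⁻)`. As `|d| ≤ 1`, nature does best by making the arm that is pulled less
often certain to pay and the other one worthless, which costs the agent `R * max a (1 - a)`. This is
`R` at `a = 1` and is smallest, namely `R / 2`, at the uniform policy `a = 1 / 2`.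
-/

theorem regret_eq_posPart_negPart (R a : ℝ) (p : ℝ × ℝ) :
    regret R a p = R * (a * (p.2 - p.1)⁺ + (1 - a) * (p.2 - p.1)⁻) := by
  rcases le_total p.1 p.2 with h | h
  · rw [posPart_of_nonneg (sub_nonneg.2 h), negPart_of_nonneg (sub_nonneg.2 h), regret, reward,
      max_eq_right h]
    ring
  · rw [posPart_of_nonpos (sub_nonpos.2 h), negPart_of_nonpos (sub_nonpos.2 h), regret, reward,
      max_eq_left h]
    ring

theorem abs_sub_le_one_of_mem_unitSq {p : ℝ × ℝ} (hp : p ∈ unitSq) : |p.2 - p.1| ≤ 1 := by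
  obtain ⟨⟨hA₀, hA₁⟩, hB₀, hB₁⟩ := hp
  exact abs_sub_le_iff.2 ⟨by linarith, by linarith⟩

theorem half_le_max_one_sub (a : ℝ) : 1 / 2 ≤ max a (1 - a) := by
  linarith [le_max_left a (1 - a), le_max_right a (1 - a)]

section

variable {R : ℝ}

theorem regret_le (hR : 0 ≤ R) (a : ℝ) {p : ℝ × ℝ} (hp : p ∈ unitSq) :
    regret R a p ≤ R * max a (1 - a) := by
  have hmax : 0 ≤ max a (1 - a) := one_half_pos.le.trans (half_le_max_one_sub a)
  rw [regret_eq_posPart_negPart]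
  refine mul_le_mul_of_nonneg_left ?_ hR
  calc a * (p.2 - p.1)⁺ + (1 - a) * (p.2 - p.1)⁻
      ≤ max a (1 - a) * (p.2 - p.1)⁺ + max a (1 - a) * (p.2 - p.1)⁻ := by
        gcongr
        exacts [le_max_left _ _, le_max_right _ _]
    _ = max a (1 - a) * |p.2 - p.1| := by rw [← mul_add, posPart_add_negPart]
    _ ≤ max a (1 - a) := mul_le_of_le_one_right hmax (abs_sub_le_one_of_mem_unitSq hp)

theorem isGreatest_regret_image (hR : 0 ≤ R) (a : ℝ) :
    IsGreatest (regret R a '' unitSq) (R * max a (1 - a)) := by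
  refine ⟨?_, Set.forall_mem_image.2 fun _ hp ↦ regret_le hR a hp⟩
  rcases max_choice a (1 - a) with h | h
  · exact ⟨(0, 1), by simp [unitSq], by simp [regret_eq_posPart_negPart, h]⟩
  · exact ⟨(1, 0), by simp [unitSq], by simp [regret_eq_posPart_negPart, h]⟩

theorem maxRegret_eq (hR : 0 ≤ R) (a : ℝ) : maxRegret R a = R * max a (1 - a) :=
  (isGreatest_regret_image hR a).csSup_eq

theorem isLeast_maxRegret_image (hR : 0 ≤ R) :
    IsLeast (maxRegret R '' Set.Icc 0 1) (R / 2) := by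
  refine ⟨⟨1 / 2, by norm_num, ?_⟩, Set.forall_mem_image.2 fun a _ ↦ ?_⟩
  · rw [maxRegret_eq hR, sub_half, max_self, mul_one_div]
  · rw [maxRegret_eq hR, div_eq_mul_one_div]
    exact mul_le_mul_of_nonneg_left (half_le_max_one_sub a) hR

theorem minimaxRegret_eq (hR : 0 ≤ R) : minimaxRegret R = R / 2 :=
  (isLeast_maxRegret_image hR).csInf_eq

theorem maxRegret_one_sub_minimaxRegret (hR : 0 ≤ R) :
    maxRegret R 1 - minimaxRegret R = R / 2 := by
  rw [maxRegret_eq hR, minimaxRegret_eq hR, sub_self, max_eq_left zero_le_one, mul_one, sub_half]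

end

/-- the max regret of the reward-maximizing policy `a = 1` exceeds the minimax
regret by exactly `R/2`, so the gap can be made arbitrarily large. -/
theorem reward_maximizing_gap :
    (∀ R : ℝ, 0 < R → maxRegret R 1 - minimaxRegret R = R / 2) ∧
    (∀ M : ℝ, 0 < M → ∃ R : ℝ, 0 < R ∧ M < maxRegret R 1 - minimaxRegret R) := by
  refine ⟨fun R hR ↦ maxRegret_one_sub_minimaxRegret hR.le, fun M hM ↦ ⟨4 * M, by positivity, ?_⟩⟩
  rw [maxRegret_one_sub_minimaxRegret (by positivity)]
  linarith
end

section
/- For every R ≥ 1, in the modified instance the policy a = 1/2 has maximum regret equal to R/2: sup over p ∈ [0,1]×[0,1] of L'_R(1/2, p) = R/2. Consequently, the minimax regret min over a ∈ [0,1] of sup over p of L'_R(a, p) is at most R/2, and the gap between the max regret of the reward-maximizing policy a = 1 and the minimax regret is at least R/2 − 1, which is unbounded as R → ∞. -/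
/-- Modified instance: agent's expected reward `G'_R(a, p) = a·p_A·R + (1 − a)·p_B·(R − 1)`. -/
noncomputable def reward' (R a : ℝ) (p : ℝ × ℝ) : ℝ := a * p.1 * R + (1 - a) * p.2 * (R - 1)

/-- Modified instance regret `L'_R(a, p) = max(p_A·R, p_B·(R − 1)) − G'_R(a, p)`. -/
noncomputable def regret' (R a : ℝ) (p : ℝ × ℝ) : ℝ :=
  max (p.1 * R) (p.2 * (R - 1)) - reward' R a p

/-- Max regret of policy `a` in the modified instance. -/
noncomputable def maxRegret' (R a : ℝ) : ℝ := sSup (regret' R a '' unitSq)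

/-- Minimax regret of the modified instance. -/
noncomputable def minimaxRegret' (R : ℝ) : ℝ :=
  sInf ((fun a => maxRegret' R a) '' Set.Icc (0 : ℝ) 1)

/-!
For `a ∈ [0, 1]`, the regret at `p` is `(1 - a) * d` or `-a * d`, whichever is larger, where
`d = p.1 * R - p.2 * (R - 1)`. The corners `(1, 0)` and `(0, 1)` make `d` extreme, so the max
regret of `a` is `max ((1 - a) * R) (a * (R - 1))`, which is `R / 2` at `a = 1 / 2` and `R - 1` at
`a = 1`.
-/

open Filter

section

variable {R a : ℝ}

theorem regret'_eq_max (R a : ℝ) (p : ℝ × ℝ) :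
    regret' R a p =
      max ((1 - a) * (p.1 * R - p.2 * (R - 1))) (a * (p.2 * (R - 1) - p.1 * R)) := by
  rw [regret', reward', ← max_sub_sub_right]
  congr 1 <;> ring

theorem regret'_nonneg (ha : a ∈ Set.Icc (0 : ℝ) 1) (p : ℝ × ℝ) : 0 ≤ regret' R a p := by
  have h : a • (p.1 * R) + (1 - a) • (p.2 * (R - 1)) ≤ max (p.1 * R) (p.2 * (R - 1)) :=
    Convex.combo_le_max _ _ ha.1 (sub_nonneg.2 ha.2) (add_sub_cancel a 1)
  simpa only [regret', reward', sub_nonneg, smul_eq_mul, mul_assoc] using h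

theorem regret'_le_max (hR : 1 ≤ R) (ha : a ∈ Set.Icc (0 : ℝ) 1) {p : ℝ × ℝ} (hp : p ∈ unitSq) :
    regret' R a p ≤ max ((1 - a) * R) (a * (R - 1)) := by
  obtain ⟨⟨hA₀, hA₁⟩, hB₀, hB₁⟩ := hp
  have hR₀ : 0 ≤ R := zero_le_one.trans hR
  have hR₁ : 0 ≤ R - 1 := sub_nonneg.2 hR
  have hA : p.1 * R - p.2 * (R - 1) ≤ R :=
    (sub_le_self _ (mul_nonneg hB₀ hR₁)).trans (mul_le_of_le_one_left hR₀ hA₁)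
  have hB : p.2 * (R - 1) - p.1 * R ≤ R - 1 :=
    (sub_le_self _ (mul_nonneg hA₀ hR₀)).trans (mul_le_of_le_one_left hR₁ hB₁)
  rw [regret'_eq_max]
  exact max_le_max (mul_le_mul_of_nonneg_left hA (sub_nonneg.2 ha.2))
    (mul_le_mul_of_nonneg_left hB ha.1)

theorem isLUB_regret'_image_unitSq (hR : 1 ≤ R) (ha : a ∈ Set.Icc (0 : ℝ) 1) :
    IsLUB (regret' R a '' unitSq) (max ((1 - a) * R) (a * (R - 1))) := by
  refine ⟨Set.forall_mem_image.2 fun p hp => regret'_le_max hR ha hp, fun b hb => max_le ?_ ?_⟩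
  · calc
      (1 - a) * R ≤ regret' R a (1, 0) := by simp [regret'_eq_max]
      _ ≤ b := hb (Set.mem_image_of_mem _ (by simp [unitSq]))
  · calc
      a * (R - 1) ≤ regret' R a (0, 1) := by simp [regret'_eq_max]
      _ ≤ b := hb (Set.mem_image_of_mem _ (by simp [unitSq]))

theorem maxRegret'_eq_max (hR : 1 ≤ R) (ha : a ∈ Set.Icc (0 : ℝ) 1) :
    maxRegret' R a = max ((1 - a) * R) (a * (R - 1)) :=
  (isLUB_regret'_image_unitSq hR ha).csSup_eq (Set.Nonempty.image _ ⟨(0, 0), by simp [unitSq]⟩)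

theorem maxRegret'_half (hR : 1 ≤ R) : maxRegret' R (1 / 2) = R / 2 := by
  rw [maxRegret'_eq_max hR (by norm_num), max_eq_left (by linarith)]
  ring

theorem maxRegret'_one (hR : 1 ≤ R) : maxRegret' R 1 = R - 1 := by
  rw [maxRegret'_eq_max hR (by norm_num), sub_self, zero_mul, one_mul,
    max_eq_right (sub_nonneg.2 hR)]

theorem maxRegret'_nonneg (ha : a ∈ Set.Icc (0 : ℝ) 1) : 0 ≤ maxRegret' R a :=
  Real.sSup_nonneg (Set.forall_mem_image.2 fun p _ => regret'_nonneg ha p)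

theorem minimaxRegret'_le_maxRegret' (ha : a ∈ Set.Icc (0 : ℝ) 1) :
    minimaxRegret' R ≤ maxRegret' R a :=
  csInf_le ⟨0, Set.forall_mem_image.2 fun _ hb => maxRegret'_nonneg hb⟩
    (Set.mem_image_of_mem _ ha)

theorem minimaxRegret'_le_half (hR : 1 ≤ R) : minimaxRegret' R ≤ R / 2 :=
  (minimaxRegret'_le_maxRegret' (by norm_num)).trans_eq (maxRegret'_half hR)

theorem half_sub_one_le_maxRegret'_one_sub_minimaxRegret' (hR : 1 ≤ R) :
    R / 2 - 1 ≤ maxRegret' R 1 - minimaxRegret' R := by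
  rw [maxRegret'_one hR]
  linarith [minimaxRegret'_le_half hR]

theorem tendsto_maxRegret'_one_sub_minimaxRegret'_atTop :
    Tendsto (fun R => maxRegret' R 1 - minimaxRegret' R) atTop atTop := by
  have h : Tendsto (fun R : ℝ => R / 2 - 1) atTop atTop :=
    tendsto_atTop_add_const_right _ (-1) (tendsto_id.atTop_div_const two_pos)
  refine tendsto_atTop_mono' _ ?_ h
  filter_upwards [eventually_ge_atTop 1] with R hR
  exact half_sub_one_le_maxRegret'_one_sub_minimaxRegret' hR

end

/-- for every `R ≥ 1`, in the modified instance the policy `a = 1/2` has max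
regret `R/2`; hence the minimax regret is at most `R/2`, the gap between the max regret of
the reward-maximizing policy `a = 1` and the minimax regret is at least `R/2 − 1`, and this
gap is unbounded as `R → ∞`. -/
theorem modified_instance_gap (R : ℝ) (hR : 1 ≤ R) :
    maxRegret' R (1 / 2) = R / 2 ∧
    minimaxRegret' R ≤ R / 2 ∧
    R / 2 - 1 ≤ maxRegret' R 1 - minimaxRegret' R ∧
    ∀ M : ℝ, ∃ R' : ℝ, 1 ≤ R' ∧ M < maxRegret' R' 1 - minimaxRegret' R' := by
  refine ⟨maxRegret'_half hR, minimaxRegret'_le_half hR,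
    half_sub_one_le_maxRegret'_one_sub_minimaxRegret' hR, fun M => ?_⟩
  exact ((eventually_ge_atTop 1).and
    (tendsto_maxRegret'_one_sub_minimaxRegret'_atTop.eventually_gt_atTop M)).exists
end

section
/- Correctness of the double-oracle stopping condition: let Π' ⊆ Π and Ω' ⊆ Ω be nonempty subsets and let (σ, τ) be a Nash equilibrium of the restricted regret game on Π' × Ω'. Suppose the best pure responses over the full strategy spaces are already available in the restricted sets, i.e., min over π ∈ Π of Σ_ω τ(ω)·u(π, ω) is attained by some element of Π', and max over ω ∈ Ω of Σ_π σ(π)·u(π, ω) is attained by some element of Ω'. Then (σ, τ) is a Nash equilibrium of the full regret game: U(σ, τ') ≤ U(σ, τ) ≤ U(σ', τ) for every mixed strategy σ' on Π and every mixed strategy τ' on Ω. -/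
/-- A mixed strategy supported on the subset `S` of a finite type: nonnegative weights
summing to 1 that vanish outside `S`. -/
def IsMixedOn {α : Type*} [Fintype α] (S : Finset α) (σ : α → ℝ) : Prop :=
  (∀ x, 0 ≤ σ x) ∧ (∑ x, σ x = 1) ∧ ∀ x ∉ S, σ x = 0

/-- Expected regret `U(σ, τ) = Σ_{π, ω} σ(π)·τ(ω)·u(π, ω)` of mixed strategies. -/
def expRegret {P O : Type*} [Fintype P] [Fintype O] (u : P → O → ℝ)
    (σ : P → ℝ) (τ : O → ℝ) : ℝ :=
  ∑ π, ∑ ω, σ π * τ ω * u π ω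

/-- `(σ, τ)` is a Nash equilibrium of the regret game restricted to `P' × O'`:
the agent (minimizing) plays `σ` on `P'`, nature (maximizing) plays `τ` on `O'`, and
`U(σ, τ') ≤ U(σ, τ) ≤ U(σ', τ)` for all mixed `σ'` on `P'` and `τ'` on `O'`. -/
def NashOn {P O : Type*} [Fintype P] [Fintype O] (u : P → O → ℝ)
    (P' : Finset P) (O' : Finset O) (σ : P → ℝ) (τ : O → ℝ) : Prop :=
  IsMixedOn P' σ ∧ IsMixedOn O' τ ∧
    (∀ τ', IsMixedOn O' τ' → expRegret u σ τ' ≤ expRegret u σ τ) ∧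
    (∀ σ', IsMixedOn P' σ' → expRegret u σ τ ≤ expRegret u σ' τ)

/-!
Expected regret is linear in each player's strategy separately, so an equilibrium need only be
tested against pure deviations. A pure deviation in the full game does no better than a best pure
response, which lies in the restricted set and is therefore already unprofitable.
-/

namespace IsMixedOn

variable {α : Type*} [Fintype α] {S T : Finset α} {σ : α → ℝ}

lemma mono (hσ : IsMixedOn S σ) (hST : S ⊆ T) : IsMixedOn T σ :=
  ⟨hσ.1, hσ.2.1, fun x hx => hσ.2.2 x fun hxS => hx (hST hxS)⟩

lemma pi_single [DecidableEq α] {a : α} (ha : a ∈ S) : IsMixedOn S (Pi.single a (1 : ℝ)) :=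
  have hsimplex := single_mem_stdSimplex ℝ a
  ⟨hsimplex.1, hsimplex.2, fun _ hx => Pi.single_eq_of_ne (ne_of_mem_of_not_mem ha hx).symm 1⟩

variable {E : Type*} [AddCommGroup E] [Module ℝ E] {s : Set E} {f : α → E}

lemma sum_smul_mem (hσ : IsMixedOn S σ) (hs : Convex ℝ s) (hf : ∀ x ∈ S, f x ∈ s) :
    ∑ x, σ x • f x ∈ s := by
  obtain ⟨hnonneg, hsum, hzero⟩ := hσ
  have hsum_S : ∑ x ∈ S, σ x = 1 := by
    rw [Finset.sum_subset S.subset_univ fun x _ hx => hzero x hx, hsum]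
  rw [← Finset.sum_subset S.subset_univ fun x _ hx => by rw [hzero x hx, zero_smul]]
  exact hs.sum_mem (fun x _ => hnonneg x) hsum_S hf

end IsMixedOn

lemma forall_isMixedOn_sum_smul_mem_iff {α E : Type*} [Fintype α] [AddCommGroup E] [Module ℝ E]
    {S : Finset α} {s : Set E} {f : α → E} (hs : Convex ℝ s) :
    (∀ σ, IsMixedOn S σ → ∑ x, σ x • f x ∈ s) ↔ ∀ x ∈ S, f x ∈ s := by
  classical
  refine ⟨fun h x hx => ?_, fun h σ hσ => hσ.sum_smul_mem hs h⟩
  simpa [Pi.single_apply] using h _ (IsMixedOn.pi_single hx)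

section Regret

variable {P O : Type*} [Fintype P] [Fintype O] (u : P → O → ℝ)

lemma expRegret_eq_sum_left (σ : P → ℝ) (τ : O → ℝ) :
    expRegret u σ τ = ∑ π, σ π * ∑ ω, τ ω * u π ω := by
  simp only [expRegret, Finset.mul_sum, mul_assoc]

lemma expRegret_eq_sum_right (σ : P → ℝ) (τ : O → ℝ) :
    expRegret u σ τ = ∑ ω, τ ω * ∑ π, σ π * u π ω := by
  rw [expRegret, Finset.sum_comm]
  simp only [Finset.mul_sum, mul_assoc, mul_left_comm]

variable {u}

lemma forall_isMixedOn_expRegret_le_iff {O' : Finset O} {σ : P → ℝ} {c : ℝ} :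
    (∀ τ, IsMixedOn O' τ → expRegret u σ τ ≤ c) ↔ ∀ ω ∈ O', ∑ π, σ π * u π ω ≤ c := by
  simp only [expRegret_eq_sum_right]
  exact forall_isMixedOn_sum_smul_mem_iff (convex_Iic c)

lemma forall_isMixedOn_le_expRegret_iff {P' : Finset P} {τ : O → ℝ} {c : ℝ} :
    (∀ σ, IsMixedOn P' σ → c ≤ expRegret u σ τ) ↔ ∀ π ∈ P', c ≤ ∑ ω, τ ω * u π ω := by
  simp only [expRegret_eq_sum_left]
  exact forall_isMixedOn_sum_smul_mem_iff (convex_Ici c)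

lemma nashOn_iff_forall_pure {P' : Finset P} {O' : Finset O} {σ : P → ℝ} {τ : O → ℝ} :
    NashOn u P' O' σ τ ↔ IsMixedOn P' σ ∧ IsMixedOn O' τ ∧
      (∀ ω ∈ O', ∑ π, σ π * u π ω ≤ expRegret u σ τ) ∧
      (∀ π ∈ P', expRegret u σ τ ≤ ∑ ω, τ ω * u π ω) := by
  rw [NashOn, forall_isMixedOn_expRegret_le_iff, forall_isMixedOn_le_expRegret_iff]

end Regret

/-- correctness of the double-oracle stopping condition. If `(σ, τ)` is a
Nash equilibrium of the restricted regret game on `P' × O'` and the best pure responses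
over the full strategy spaces are already available in the restricted sets, then `(σ, τ)`
is a Nash equilibrium of the full regret game. -/
theorem double_oracle_stopping {P O : Type*} [Fintype P] [Fintype O]
    [Nonempty P] [Nonempty O] (u : P → O → ℝ)
    (P' : Finset P) (O' : Finset O) (hP' : P'.Nonempty) (hO' : O'.Nonempty)
    (σ : P → ℝ) (τ : O → ℝ) (hNash : NashOn u P' O' σ τ)
    (hAgent : ∃ π' ∈ P', ∀ π : P, ∑ ω, τ ω * u π' ω ≤ ∑ ω, τ ω * u π ω)
    (hNature : ∃ ω' ∈ O', ∀ ω : O, ∑ π, σ π * u π ω ≤ ∑ π, σ π * u π ω') :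
    NashOn u Finset.univ Finset.univ σ τ := by
  obtain ⟨hσ, hτ, hNature_le, hAgent_ge⟩ := nashOn_iff_forall_pure.1 hNash
  obtain ⟨π', hπ', hπ'_best⟩ := hAgent
  obtain ⟨ω', hω', hω'_best⟩ := hNature
  exact nashOn_iff_forall_pure.2
    ⟨hσ.mono P'.subset_univ, hτ.mono O'.subset_univ,
      fun ω _ => (hω'_best ω).trans (hNature_le ω' hω'),
      fun π _ => (hAgent_ge π' hπ').trans (hπ'_best π)⟩
end
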